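/- Let G = (V,E) be a finite graph, w : V → ℕ node weights, k ∈ ℕ, and for each node v a monotone predicate P_v : (ℕ ≤ k)^(N(v) ∪ {v}) → Prop, meaning: if P_v holds for an assignment x and x' pointwise dominates x (x'(u) ≥ x(u) for all u in v's closed neighborhood), then P_v holds for x'. Suppose o : V → {0,…,k} satisfies P_v(o restricted to v's closed neighborhood) for all v ∈ V, and o minimizes the total weight ∑_v w(v)·o(v) among all such feasible assignments. Then for every U ⊆ V and every g : U → {0,…,k} such that P_v(g) holds for all v ∈ inner(U), we have ∑_{v ∈ inner²(U)} w(v)·o(v) ≤ ∑_{v ∈ U} w(v)·g(v). -/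

import Mathlib

/-- `inner(U) = {u ∈ U | N(u) ⊆ U}` as a Finset. -/
def innF {V : Type*} [Fintype V] [DecidableEq V] (G : SimpleGraph V) [DecidableRel G.Adj]
    (U : Finset V) : Finset V :=
  U.filter fun u => ∀ x, G.Adj u x → x ∈ U

/-- Lemma 4.1 (covering MinDGPs): if `o` is a minimum-weight assignment feasible for the
monotone-upward local predicates `P`, then for any `U` and any `g` respecting the
predicates at `inner(U)`, `∑_{v ∈ inner²(U)} w(v)·o(v) ≤ ∑_{v ∈ U} w(v)·g(v)`. -/
theorem stmt3 {V : Type*} [Fintype V] [DecidableEq V] (G : SimpleGraph V)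
    [DecidableRel G.Adj] (w : V → ℕ) (k : ℕ) (P : V → (V → ℕ) → Prop)
    (hmono : ∀ v (x x' : V → ℕ),
      (∀ u, (u = v ∨ G.Adj v u) → x u ≤ x' u) → P v x → P v x')
    (o : V → ℕ) (hok : ∀ v, o v ≤ k) (hfeas : ∀ v, P v o)
    (hopt : ∀ o' : V → ℕ, (∀ v, o' v ≤ k) → (∀ v, P v o') →
      ∑ v, w v * o v ≤ ∑ v, w v * o' v)
    (U : Finset V) (g : V → ℕ) (hgk : ∀ v, g v ≤ k)
    (hg : ∀ v ∈ innF G U, P v g) :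
    ∑ v ∈ innF G (innF G U), w v * o v ≤ ∑ v ∈ U, w v * g v := by
  have h2 : innF G (innF G U) ⊆ U :=
    (Finset.filter_subset _ _).trans (Finset.filter_subset _ _)
  have hmem : ∀ (S : Finset V) (v : V), v ∈ innF G S ↔ v ∈ S ∧ ∀ x, G.Adj v x → x ∈ S := by
    intro S v
    simp [innF]
  let o' : V → ℕ := fun v =>
    if v ∈ innF G (innF G U) then g v else if v ∈ U then max (o v) (g v) else o v
  have hopt' := hopt o' (by
    intro v
    have := hok v
    have := hgk v
    simp only [o']
    split_ifs <;> simp_all) (by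
    intro v
    by_cases hv : v ∈ innF G U
    · refine hmono v g o' ?_ (hg v hv)
      intro u hu
      have huU : u ∈ U := by
        rw [hmem] at hv
        rcases hu with rfl | hu
        · exact hv.1
        · exact hv.2 u hu
      simp only [o']
      split_ifs <;> simp
    · refine hmono v o o' ?_ (hfeas v)
      intro u hu
      have huI : u ∉ innF G (innF G U) := by
        intro h
        rw [hmem] at h
        rcases hu with rfl | hu
        · exact hv h.1
        · exact hv (h.2 v hu.symm)
      simp only [o', if_neg huI]
      split_ifs <;> simp)
  have key : ∑ v, w v * o' v + ∑ v ∈ innF G (innF G U), w v * o v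
      ≤ ∑ v, w v * o v + ∑ v ∈ U, w v * g v := by
    have e : ∀ (S : Finset V) (f : V → ℕ),
        ∑ v ∈ S, f v = ∑ v, if v ∈ S then f v else 0 := by
      intro S f
      simp
    rw [e U, e (innF G (innF G U)), ← Finset.sum_add_distrib, ← Finset.sum_add_distrib]
    refine Finset.sum_le_sum fun v _ => ?_
    by_cases h : v ∈ innF G (innF G U)
    · simp only [o', if_pos h, if_pos (h2 h)]
      omega
    · by_cases hU : v ∈ U
      · simp only [o', if_neg h, if_pos hU, add_zero]
        rw [← mul_add]
        exact Nat.mul_le_mul_left _ (by omega)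
      · simp [o', h, hU]
  omega
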